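/- Let k ≥ 4 be even, a = k/2, and let L ⊆ ℤ⁴ be the ℤ-span of v₁ = (-a-1, a+1, a, -a+1), v₂ = (a-1, a+1, a+1, -a), v₃ = (-a-1, -a+1, a+1, -a), v₄ = (-a, -a, a, a+1). Then for every x ∈ ℤ⁴ all of whose coordinates have absolute value at most a + 1, there exists w ∈ L with ‖x - w‖₁ ≤ k, where ‖y‖₁ = |y₁| + |y₂| + |y₃| + |y₄|. -/

import Mathlib

/-!
The lattice contains `v₂ - v₁`, `v₁ - v₃`, `v₂ + v₄`, `v₄ - v₃`, which are the columns of `D + A`,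
where `D = diag (2a, 2a, 2a + 1, 2a + 1)` and `A` is skew-symmetric with entries in `{-1, 0, 1}`.
It also contains the half-sums `w = (D + A) σ / 2` for all sign vectors `σ`. Since `A` is skew,
`∑ i, σ i * w i = tr D / 2 = 4a + 1`; so if `0 ≤ σ i * y i ≤ σ i * w i` for all `i`, then
`‖y‖₁ + ‖y - w‖₁ = 4a + 1` and one of the two norms is at most `2a = k`.

A vector `y` of least norm in its class lies in such a box. Comparing `y` with its translates by the
columns of `± (D + A)` bounds `2 |y i|` by the `i`-th diagonal entry plus the costs of moving the
other coordinates by one unit, and these costs are entries of `A` up to the signs of `y`. A zero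
coordinate can be given a sign compatible with all these bounds: two bounds demanding opposite signs
would add up, with cancelling unit entries, to contradict minimality of `y` against a translate by a
sum or difference of two columns.
-/

section L1Norm

variable {ι : Type*} [Fintype ι]

/-- The `l¹` norm of an integer vector, valued in `ℤ`. -/
def l1Norm (y : ι → ℤ) : ℤ := ∑ i, |y i|

/-- `y` has the least `l¹` norm among the vectors congruent to it modulo `L`. -/
def IsL1Minimal (L : Submodule ℤ (ι → ℤ)) (y : ι → ℤ) : Prop :=
  ∀ u ∈ L, l1Norm y ≤ l1Norm (y - u)

theorem exists_mem_isL1Minimal_sub (L : Submodule ℤ (ι → ℤ)) (x : ι → ℤ) :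
    ∃ w ∈ L, IsL1Minimal L (x - w) := by
  obtain ⟨w, hw, hmin⟩ := exists_minimalFor_of_wellFoundedLT (· ∈ L)
    (fun w => (l1Norm (x - w)).toNat) ⟨0, L.zero_mem⟩
  have hnonneg (y : ι → ℤ) : 0 ≤ l1Norm y := Finset.sum_nonneg fun i _ => abs_nonneg (y i)
  refine ⟨w, hw, fun u hu => ?_⟩
  rw [sub_sub]
  refine (le_total _ _).elim id fun h => ?_
  have hle : (l1Norm (x - w)).toNat ≤ (l1Norm (x - (w + u))).toNat :=
    hmin (L.add_mem hw hu) (Int.toNat_le_toNat h)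
  exact (Int.toNat_le.1 hle).trans_eq (Int.toNat_of_nonneg (hnonneg _))

theorem l1Norm_add_l1Norm_sub {y w : ι → ℤ} {σ : ι → ℤˣ} (hy : ∀ i, 0 ≤ σ i * y i)
    (hyw : ∀ i, σ i * y i ≤ σ i * w i) :
    l1Norm y + l1Norm (y - w) = ∑ i, σ i * w i := by
  have abs_unit_mul (e : ℤˣ) (t : ℤ) : |e * t| = |t| := by
    rw [abs_mul, Int.isUnit_iff_abs_eq.1 e.isUnit, one_mul]
  rw [l1Norm, l1Norm, ← Finset.sum_add_distrib]
  refine Finset.sum_congr rfl fun i _ => ?_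
  rw [Pi.sub_apply, ← abs_unit_mul (σ i) (y i), ← abs_unit_mul (σ i) (y i - w i), mul_sub,
    abs_of_nonneg (hy i), abs_of_nonpos (sub_nonpos.2 (hyw i))]
  ring

end L1Norm

section SignSelection

/-- The increase of `|t|` when `t` is moved by the unit `-e`. -/
def stepCost (t : ℤ) (e : ℤˣ) : ℤ := |t - e| - |t|

/-- The step cost of a coordinate to which the sign `σ` has been assigned. It agrees with `stepCost`
on nonzero `t` of sign `σ`, and is smaller when `t = 0` and `e = σ`. -/
def signCost (σ e : ℤˣ) : ℤ := -(σ * e : ℤˣ)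

/-- The properties common to `stepCost t` and `signCost σ`, for `σ` a sign of `t`. -/
structure IsStepCost (t : ℤ) (c : ℤˣ → ℤ) : Prop where
  eq_one_or_neg_one : ∀ e, c e = 1 ∨ c e = -1
  apply_one_of_pos : 0 < t → c 1 = -1
  apply_neg_one_of_neg : t < 0 → c (-1) = -1
  add_nonneg : 0 ≤ c 1 + c (-1)

theorem forall_intUnits {P : ℤˣ → Prop} : (∀ e, P e) ↔ P 1 ∧ P (-1) :=
  ⟨fun h => ⟨h 1, h (-1)⟩, fun h e => by rcases Int.units_eq_one_or e with rfl | rfl <;> simp [h]⟩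

theorem isStepCost_stepCost (t : ℤ) : IsStepCost t (stepCost t) := by
  constructor <;>
    simp only [forall_intUnits, stepCost, Units.val_one, Units.val_neg, sub_neg_eq_add] <;> grind

theorem isStepCost_signCost {t : ℤ} {σ : ℤˣ} (h : 0 ≤ σ * t) : IsStepCost t (signCost σ) := by
  rcases Int.units_eq_one_or σ with rfl | rfl <;> constructor <;>
    simp only [forall_intUnits, signCost, Units.val_one, Units.val_neg, one_mul, neg_mul,
      neg_neg] at h ⊢ <;> grind

theorem IsStepCost.le_one {t : ℤ} {c : ℤˣ → ℤ} (hc : IsStepCost t c) (e : ℤˣ) : c e ≤ 1 := by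
  rcases hc.eq_one_or_neg_one e with h | h <;> simp [h]

theorem IsStepCost.exists_sign {t : ℤ} {b c : ℤˣ → ℤ} (hc : IsStepCost t c)
    (hbc : ∀ e, b e ≤ c e) (hb : b 1 ≤ -1 ∨ b (-1) ≤ -1) :
    ∃ σ : ℤˣ, 0 ≤ σ * t ∧ ∀ e, b e ≤ signCost σ e := by
  have hle e : b e ≤ 1 := (hbc e).trans (hc.le_one e)
  have of_nonneg (ht : 0 ≤ t) (h : b 1 ≤ -1) : ∃ σ : ℤˣ, 0 ≤ σ * t ∧ ∀ e, b e ≤ signCost σ e :=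
    ⟨1, by simpa using ht, forall_intUnits.2 ⟨h, hle (-1)⟩⟩
  have of_nonpos (ht : t ≤ 0) (h : b (-1) ≤ -1) :
      ∃ σ : ℤˣ, 0 ≤ σ * t ∧ ∀ e, b e ≤ signCost σ e :=
    ⟨-1, by simpa using ht, forall_intUnits.2 ⟨by simpa [signCost] using hle 1,
      by simpa [signCost] using h⟩⟩
  rcases lt_trichotomy t 0 with ht | rfl | ht
  · exact of_nonpos ht.le (hc.apply_neg_one_of_neg ht ▸ hbc (-1))
  · exact hb.elim (of_nonneg le_rfl) (of_nonpos le_rfl)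
  · exact of_nonneg ht.le (hc.apply_one_of_pos ht ▸ hbc 1)

/- For `δ = 1` the last two coordinates are `(z, t)`, for `δ = -1` they are `(t, z)`: exchanging
them reverses all signs in the skew part of the matrix. -/
theorem exists_sign_of_odd_coordinate {a t y₀ y₁ z : ℤ} {c₀ c₁ c c' : ℤˣ → ℤ} (δ : ℤˣ)
    (ha : 0 < a) (h₀ : IsStepCost y₀ c₀) (h₁ : IsStepCost y₁ c₁) (hz : IsStepCost z c')
    (ht : IsStepCost t c)
    (haxis : ∀ e : ℤˣ,
      2 * (e * y₀) ≤ 2 * a + c' (δ * e) + c (-(δ * e)) ∧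
      2 * (e * y₁) ≤ 2 * a + c' (-(δ * e)) + c (δ * e) ∧
      2 * (e * z) ≤ 2 * a + 1 + c₀ (-(δ * e)) + c₁ (δ * e) + c (δ * e))
    (hpair : ∀ e : ℤˣ,
      2 * (e * (y₀ + y₁)) ≤ 4 * a ∧
      2 * (e * (y₀ + z)) ≤ 4 * a + 1 + c₁ (δ * e) ∧
      2 * (e * (y₁ - z)) ≤ 4 * a + 1 + c₀ (δ * e)) :
    ∃ σ : ℤˣ, 0 ≤ σ * t ∧ ∀ e : ℤˣ,
      2 * (e * y₀) ≤ 2 * a + c' (δ * e) + signCost σ (-(δ * e)) ∧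
      2 * (e * y₁) ≤ 2 * a + c' (-(δ * e)) + signCost σ (δ * e) ∧
      2 * (e * z) ≤ 2 * a + 1 + c₀ (-(δ * e)) + c₁ (δ * e) + signCost σ (δ * e) := by
  let b (e : ℤˣ) := max (max
    (2 * (-(δ * e) * y₀) - (2 * a + c' (-e)))
    (2 * (δ * e * y₁) - (2 * a + c' (-e))))
    (2 * (δ * e * z) - (2 * a + 1 + c₀ (-e) + c₁ e))
  have hbc : ∀ e, b e ≤ c e := by
    rcases Int.units_eq_one_or δ with rfl | rfl <;>
      simp only [b, forall_intUnits, Units.val_one, Units.val_neg, one_mul, neg_mul, mul_neg,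
        neg_neg] at haxis ⊢ <;>
      omega
  -- Otherwise two of the bounds demand opposite signs of `t`, and their sum violates `hpair`.
  have hb : b 1 ≤ -1 ∨ b (-1) ≤ -1 := by
    obtain ⟨unit₀, pos₀, neg₀, nonneg₀⟩ := h₀
    obtain ⟨unit₁, pos₁, neg₁, nonneg₁⟩ := h₁
    obtain ⟨unit_z, pos_z, neg_z, nonneg_z⟩ := hz
    rcases Int.units_eq_one_or δ with rfl | rfl <;>
      simp only [b, forall_intUnits, Units.val_one, Units.val_neg, one_mul, neg_mul, mul_neg,
        neg_neg, max_le_iff] at unit₀ unit₁ unit_z hpair ⊢ <;>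
      omega
  obtain ⟨σ, hσ, hbσ⟩ := ht.exists_sign hbc hb
  refine ⟨σ, hσ, ?_⟩
  rcases Int.units_eq_one_or δ with rfl | rfl <;>
    simp only [b, forall_intUnits, Units.val_one, Units.val_neg, one_mul, neg_mul, mul_neg,
      neg_neg, max_le_iff] at hbσ ⊢ <;>
    omega

/- For `δ = 1` the first two coordinates are `(t, z)`, for `δ = -1` they are `(z, t)`. -/
theorem exists_sign_of_even_coordinate {a t z y₂ y₃ : ℤ} {c c' c₂ c₃ : ℤˣ → ℤ} (δ : ℤˣ)
    (ha : 0 < a) (hz : IsStepCost z c') (h₂ : IsStepCost y₂ c₂) (h₃ : IsStepCost y₃ c₃)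
    (ht : IsStepCost t c)
    (haxis : ∀ e : ℤˣ,
      2 * (e * y₂) ≤ 2 * a + 1 + c (-(δ * e)) + c' (δ * e) + c₃ e ∧
      2 * (e * y₃) ≤ 2 * a + 1 + c (δ * e) + c' (-(δ * e)) + c₂ (-e))
    (hpair : ∀ e : ℤˣ, 2 * (e * (y₂ + y₃)) ≤ 4 * a + 2) :
    ∃ σ : ℤˣ, 0 ≤ σ * t ∧ ∀ e : ℤˣ,
      2 * (e * y₂) ≤ 2 * a + 1 + signCost σ (-(δ * e)) + c' (δ * e) + c₃ e ∧
      2 * (e * y₃) ≤ 2 * a + 1 + signCost σ (δ * e) + c' (-(δ * e)) + c₂ (-e) := by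
  let b (e : ℤˣ) := max
    (2 * (-(δ * e) * y₂) - (2 * a + 1 + c' (-e) + c₃ (-(δ * e))))
    (2 * (δ * e * y₃) - (2 * a + 1 + c' (-e) + c₂ (-(δ * e))))
  have hbc : ∀ e, b e ≤ c e := by
    rcases Int.units_eq_one_or δ with rfl | rfl <;>
      simp only [b, forall_intUnits, Units.val_one, Units.val_neg, one_mul, neg_mul, mul_neg,
        neg_neg] at haxis ⊢ <;>
      omega
  have hb : b 1 ≤ -1 ∨ b (-1) ≤ -1 := by
    obtain ⟨unit_z, _, _, nonneg_z⟩ := hz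
    obtain ⟨unit₂, pos₂, neg₂, nonneg₂⟩ := h₂
    obtain ⟨unit₃, pos₃, neg₃, nonneg₃⟩ := h₃
    rcases Int.units_eq_one_or δ with rfl | rfl <;>
      simp only [b, forall_intUnits, Units.val_one, Units.val_neg, one_mul, neg_mul, mul_neg,
        neg_neg, max_le_iff] at unit_z unit₂ unit₃ hpair ⊢ <;>
      omega
  obtain ⟨σ, hσ, hbσ⟩ := ht.exists_sign hbc hb
  refine ⟨σ, hσ, ?_⟩
  rcases Int.units_eq_one_or δ with rfl | rfl <;>
    simp only [b, forall_intUnits, Units.val_one, Units.val_neg, one_mul, neg_mul, mul_neg,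
      neg_neg, max_le_iff] at hbσ ⊢ <;>
    omega

end SignSelection

section EvenLattice

/-- The lattice `L` of the theorem, as a function of `a = k / 2`. -/
def evenLattice (a : ℤ) : Submodule ℤ (Fin 4 → ℤ) :=
  Submodule.span ℤ {![-a - 1, a + 1, a, -a + 1], ![a - 1, a + 1, a + 1, -a],
    ![-a - 1, -a + 1, a + 1, -a], ![-a, -a, a, a + 1]}

/-- The combination of `v₂ - v₁`, `v₁ - v₃`, `v₂ + v₄`, `v₄ - v₃` with coefficients `n`, that is,
`(D + A) n` with `D` diagonal and `A` skew-symmetric. -/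
def axisCombo (a : ℤ) (n : Fin 4 → ℤ) : Fin 4 → ℤ :=
  ![2 * a * n 0 - n 2 + n 3, 2 * a * n 1 + n 2 - n 3,
    n 0 - n 1 + (2 * a + 1) * n 2 - n 3, -n 0 + n 1 + n 2 + (2 * a + 1) * n 3]

theorem sum_smul_mem_evenLattice (a : ℤ) (m : Fin 4 → ℤ) :
    m 0 • ![-a - 1, a + 1, a, -a + 1] + m 1 • ![a - 1, a + 1, a + 1, -a] +
      m 2 • ![-a - 1, -a + 1, a + 1, -a] + m 3 • ![-a, -a, a, a + 1] ∈ evenLattice a := by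
  refine add_mem (add_mem (add_mem ?_ ?_) ?_) ?_ <;>
    exact Submodule.smul_mem _ _ (Submodule.subset_span (by simp))

theorem axisCombo_mem_evenLattice (a : ℤ) (n : Fin 4 → ℤ) : axisCombo a n ∈ evenLattice a := by
  convert sum_smul_mem_evenLattice a ![n 1 - n 0, n 0 + n 2, -n 1 - n 3, n 2 + n 3]
  ext i
  fin_cases i <;> simp [axisCombo] <;> ring

theorem exists_mem_evenLattice_two_mul_eq (a : ℤ) (σ : Fin 4 → ℤˣ) :
    ∃ w ∈ evenLattice a, ∀ i, 2 * w i = axisCombo a (fun j => σ j) i := by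
  have exists_half (e : ℤˣ) : ∃ m : ℤ, (e : ℤ) = 2 * m + 1 := by
    rcases Int.units_eq_one_or e with rfl | rfl
    exacts [⟨0, rfl⟩, ⟨-1, rfl⟩]
  choose m hm using fun i => exists_half (σ i)
  -- `2 • v₄` is the combination with signs `(-1, -1, 1, 1)`.
  refine ⟨axisCombo a ![m 0 + 1, m 1 + 1, m 2, m 3] + ![-a, -a, a, a + 1],
    add_mem (axisCombo_mem_evenLattice a _) (Submodule.subset_span (by simp)), fun i => ?_⟩
  fin_cases i <;> simp [axisCombo, hm] <;> ring

theorem sum_mul_axisCombo (a : ℤ) (σ : Fin 4 → ℤˣ) :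
    ∑ i, σ i * axisCombo a (fun j => σ j) i = 8 * a + 2 := by
  have sq (i) : (σ i : ℤ) * σ i = 1 := Int.units_coe_mul_self (σ i)
  simp only [Fin.sum_univ_four, axisCombo, Matrix.cons_val]
  linear_combination 2 * a * sq 0 + 2 * a * sq 1 + (2 * a + 1) * sq 2 + (2 * a + 1) * sq 3

end EvenLattice

section MinimalVectors

/-- The inequalities obtained by comparing `y` with its translates by `± (v₂ - v₁)`, `± (v₁ - v₃)`,
`± (v₂ + v₄)`, `± (v₄ - v₃)`, where `cᵢ e` stands for the cost of moving `y i` by `-e`. -/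
def AxisBounds (a : ℤ) (y : Fin 4 → ℤ) (c₀ c₁ c₂ c₃ : ℤˣ → ℤ) : Prop := ∀ e : ℤˣ,
  2 * (e * y 0) ≤ 2 * a + c₂ e + c₃ (-e) ∧
  2 * (e * y 1) ≤ 2 * a + c₂ (-e) + c₃ e ∧
  2 * (e * y 2) ≤ 2 * a + 1 + c₀ (-e) + c₁ e + c₃ e ∧
  2 * (e * y 3) ≤ 2 * a + 1 + c₀ e + c₁ (-e) + c₂ (-e)

/-- The inequalities obtained by comparing `y` with its translates by sums and differences of two
of the vectors in `AxisBounds`, chosen so that some unit entries cancel. -/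
def PairBounds (a : ℤ) (y : Fin 4 → ℤ) (c₀ c₁ : ℤˣ → ℤ) : Prop := ∀ e : ℤˣ,
  2 * (e * (y 0 + y 1)) ≤ 4 * a ∧
  2 * (e * (y 2 + y 3)) ≤ 4 * a + 2 ∧
  2 * (e * (y 0 + y 2)) ≤ 4 * a + 1 + c₁ e ∧
  2 * (e * (y 0 + y 3)) ≤ 4 * a + 1 + c₁ (-e) ∧
  2 * (e * (y 1 - y 2)) ≤ 4 * a + 1 + c₀ e ∧
  2 * (e * (y 1 - y 3)) ≤ 4 * a + 1 + c₀ (-e)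

variable {a : ℤ} {y : Fin 4 → ℤ}

theorem abs_sub_intUnit_mul_le {t d : ℤ} (e : ℤˣ) (h : |t| ≤ d) :
    |t - e * d| ≤ |t| + d - 2 * (e * t) := by
  rcases Int.units_eq_one_or e with rfl | rfl <;>
    simp only [Units.val_one, Units.val_neg, one_mul, neg_mul] <;> grind

theorem abs_lt_of_forall_abs_le_abs_sub {t d m : ℤ} (hm : m < d)
    (h : ∀ e : ℤˣ, |t| ≤ |t - e * d| + m) : |t| < d := by
  simp only [forall_intUnits, Units.val_one, Units.val_neg, one_mul, neg_mul] at h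
  grind

theorem IsL1Minimal.sum_abs_le (hy : IsL1Minimal (evenLattice a) y) (n : Fin 4 → ℤ)
    (s₀ s₁ s₂ s₃ : ℤ) (hs : axisCombo a n = ![s₀, s₁, s₂, s₃] := by
      ext i; fin_cases i <;> simp [axisCombo] <;> ring) :
    |y 0| + |y 1| + |y 2| + |y 3| ≤ |y 0 - s₀| + |y 1 - s₁| + |y 2 - s₂| + |y 3 - s₃| := by
  simpa [l1Norm, Fin.sum_univ_four, hs] using hy _ (axisCombo_mem_evenLattice a n)

theorem IsL1Minimal.abs_le_add_stepCost (hy : IsL1Minimal (evenLattice a) y) (e : ℤˣ) :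
    |y 0| ≤ |y 0 - e * (2 * a)| + stepCost (y 2) e + stepCost (y 3) (-e) ∧
    |y 1| ≤ |y 1 - e * (2 * a)| + stepCost (y 2) (-e) + stepCost (y 3) e ∧
    |y 2| ≤ |y 2 - e * (2 * a + 1)| + stepCost (y 0) (-e) + stepCost (y 1) e +
      stepCost (y 3) e ∧
    |y 3| ≤ |y 3 - e * (2 * a + 1)| + stepCost (y 0) e + stepCost (y 1) (-e) +
      stepCost (y 2) (-e) := by
  have move₀ := hy.sum_abs_le ![e, 0, 0, 0] (e * (2 * a)) 0 e (-e)
  have move₁ := hy.sum_abs_le ![0, e, 0, 0] 0 (e * (2 * a)) (-e) e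
  have move₂ := hy.sum_abs_le ![0, 0, e, 0] (-e) e (e * (2 * a + 1)) e
  have move₃ := hy.sum_abs_le ![0, 0, 0, e] e (-e) (-e) (e * (2 * a + 1))
  simp only [stepCost, Units.val_neg, sub_zero] at *
  refine ⟨?_, ?_, ?_, ?_⟩ <;> linarith

theorem IsL1Minimal.abs_lt (ha : 2 ≤ a) (hy : IsL1Minimal (evenLattice a) y) :
    |y 0| < 2 * a ∧ |y 1| < 2 * a ∧ |y 2| < 2 * a + 1 ∧ |y 3| < 2 * a + 1 := by
  have hmove := hy.abs_le_add_stepCost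
  have hcost i e := (isStepCost_stepCost (y i)).le_one e
  refine ⟨?_, ?_, ?_, ?_⟩
  · refine abs_lt_of_forall_abs_le_abs_sub (m := 2) (by omega) fun e => ?_
    linarith [(hmove e).1, hcost 2 e, hcost 3 (-e)]
  · refine abs_lt_of_forall_abs_le_abs_sub (m := 2) (by omega) fun e => ?_
    linarith [(hmove e).2.1, hcost 2 (-e), hcost 3 e]
  · refine abs_lt_of_forall_abs_le_abs_sub (m := 3) (by omega) fun e => ?_
    linarith [(hmove e).2.2.1, hcost 0 (-e), hcost 1 e, hcost 3 e]
  · refine abs_lt_of_forall_abs_le_abs_sub (m := 3) (by omega) fun e => ?_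
    linarith [(hmove e).2.2.2, hcost 0 e, hcost 1 (-e), hcost 2 (-e)]

theorem IsL1Minimal.axisBounds (ha : 2 ≤ a) (hy : IsL1Minimal (evenLattice a) y) :
    AxisBounds a y (stepCost (y 0)) (stepCost (y 1)) (stepCost (y 2)) (stepCost (y 3)) := by
  intro e
  obtain ⟨lt₀, lt₁, lt₂, lt₃⟩ := hy.abs_lt ha
  obtain ⟨move₀, move₁, move₂, move₃⟩ := hy.abs_le_add_stepCost e
  refine ⟨?_, ?_, ?_, ?_⟩
  · linarith [abs_sub_intUnit_mul_le e lt₀.le]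
  · linarith [abs_sub_intUnit_mul_le e lt₁.le]
  · linarith [abs_sub_intUnit_mul_le e lt₂.le]
  · linarith [abs_sub_intUnit_mul_le e lt₃.le]

theorem IsL1Minimal.pairBounds (ha : 2 ≤ a) (hy : IsL1Minimal (evenLattice a) y) :
    PairBounds a y (stepCost (y 0)) (stepCost (y 1)) := by
  intro e
  obtain ⟨lt₀, lt₁, lt₂, lt₃⟩ := hy.abs_lt ha
  have move₀₁ := hy.sum_abs_le ![e, e, 0, 0] (e * (2 * a)) (e * (2 * a)) 0 0
  have move₂₃ := hy.sum_abs_le ![0, 0, e, e] 0 0 (e * (2 * a)) (e * (2 * a + 2))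
  have move₀₂ := hy.sum_abs_le ![e, 0, e, 0] (e * (2 * a - 1)) e (e * (2 * a + 2)) 0
  have move₀₃ := hy.sum_abs_le ![e, 0, 0, e] (e * (2 * a + 1)) (-e) 0 (e * (2 * a))
  have move₁₂ := hy.sum_abs_le ![0, e, -e, 0] e (e * (2 * a - 1)) ((-e : ℤˣ) * (2 * a + 2)) 0
  have move₁₃ := hy.sum_abs_le ![0, e, 0, -e] (-e) (e * (2 * a + 1)) 0 ((-e : ℤˣ) * (2 * a))
  have reflect {i} (d : ℤ) (h : |y i| ≤ d) := abs_sub_intUnit_mul_le e h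
  have reflect_neg {i} (d : ℤ) (h : |y i| ≤ d) := abs_sub_intUnit_mul_le (-e) h
  simp only [stepCost, Units.val_neg, sub_zero] at *
  refine ⟨?_, ?_, ?_, ?_, ?_, ?_⟩
  · linarith [reflect (2 * a) lt₀.le, reflect (2 * a) lt₁.le]
  · linarith [reflect (2 * a) (Int.lt_add_one_iff.1 lt₂),
      reflect (i := 3) (2 * a + 2) (by omega)]
  · linarith [reflect (i := 0) (2 * a - 1) (by omega),
      reflect (i := 2) (2 * a + 2) (by omega)]
  · linarith [reflect (i := 0) (2 * a + 1) (by omega), reflect (i := 3) (2 * a) (by omega)]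
  · linarith [reflect (i := 1) (2 * a - 1) (by omega),
      reflect_neg (i := 2) (2 * a + 2) (by omega)]
  · linarith [reflect (i := 1) (2 * a + 1) (by omega),
      reflect_neg (i := 3) (2 * a) (by omega)]

/- The order of the coordinates matters: `PairBounds` contains costs of the coordinates `0` and `1`,
which must still be step costs of `y` while the signs of the coordinates `3` and `2` are chosen. -/
theorem exists_axisBounds_signCost (ha : 0 < a)
    (haxis : AxisBounds a y (stepCost (y 0)) (stepCost (y 1)) (stepCost (y 2)) (stepCost (y 3)))
    (hpair : PairBounds a y (stepCost (y 0)) (stepCost (y 1))) :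
    ∃ σ : Fin 4 → ℤˣ, (∀ i, 0 ≤ σ i * y i) ∧
      AxisBounds a y (signCost (σ 0)) (signCost (σ 1)) (signCost (σ 2)) (signCost (σ 3)) := by
  have step i := isStepCost_stepCost (y i)
  obtain ⟨σ₃, hσ₃, bounds₃⟩ := exists_sign_of_odd_coordinate 1 ha (step 0) (step 1) (step 2)
    (step 3) (by simp only [one_mul]; grind [AxisBounds])
    (by simp only [one_mul]; grind [PairBounds])
  have step₃ := isStepCost_signCost hσ₃
  obtain ⟨σ₂, hσ₂, bounds₂⟩ := exists_sign_of_odd_coordinate (-1) ha (step 0) (step 1) step₃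
    (step 2) (by simp only [neg_mul, one_mul, neg_neg] at *; grind [AxisBounds])
    (by simp only [neg_mul, one_mul]; grind [PairBounds])
  have step₂ := isStepCost_signCost hσ₂
  obtain ⟨σ₀, hσ₀, bounds₀⟩ := exists_sign_of_even_coordinate 1 ha (step 1) step₂ step₃ (step 0)
    (by simp only [neg_mul, one_mul, neg_neg] at *; grind [AxisBounds])
    (fun e => (hpair e).2.1)
  obtain ⟨σ₁, hσ₁, bounds₁⟩ := exists_sign_of_even_coordinate (-1) ha (isStepCost_signCost hσ₀)
    step₂ step₃ (step 1) (by simp only [neg_mul, one_mul, neg_neg] at *; grind)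
    (fun e => (hpair e).2.1)
  have bounds : AxisBounds a y (signCost σ₀) (signCost σ₁) (signCost σ₂) (signCost σ₃) := by
    simp only [neg_mul, one_mul, neg_neg] at bounds₁ bounds₂
    grind [AxisBounds]
  exact ⟨![σ₀, σ₁, σ₂, σ₃], by simp [Fin.forall_fin_succ, *], bounds⟩

theorem AxisBounds.two_mul_le {σ : Fin 4 → ℤˣ}
    (h : AxisBounds a y (signCost (σ 0)) (signCost (σ 1)) (signCost (σ 2)) (signCost (σ 3)))
    (i : Fin 4) : 2 * (σ i * y i) ≤ σ i * axisCombo a (fun j => σ j) i := by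
  have sq (i) : (σ i : ℤ) * σ i = 1 := Int.units_coe_mul_self (σ i)
  simp only [AxisBounds, signCost, Units.val_mul, Units.val_neg] at h
  fin_cases i <;> simp only [axisCombo, Fin.zero_eta, Fin.mk_one, Fin.reduceFinMk, Matrix.cons_val]
  · linear_combination (h (σ 0)).1 - 2 * a * sq 0
  · linear_combination (h (σ 1)).2.1 - 2 * a * sq 1
  · linear_combination (h (σ 2)).2.2.1 - (2 * a + 1) * sq 2
  · linear_combination (h (σ 3)).2.2.2 - (2 * a + 1) * sq 3

end MinimalVectors

theorem lattice_box_covered_even_general {a : ℤ} (ha : 2 ≤ a) (x : Fin 4 → ℤ) :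
    ∃ w ∈ evenLattice a, l1Norm (x - w) ≤ 2 * a := by
  obtain ⟨w, hw, hmin⟩ := exists_mem_isL1Minimal_sub (evenLattice a) x
  obtain ⟨σ, hσ, hbounds⟩ :=
    exists_axisBounds_signCost (by omega) (hmin.axisBounds ha) (hmin.pairBounds ha)
  obtain ⟨u, hu, htwo⟩ := exists_mem_evenLattice_two_mul_eq a σ
  have hle i : σ i * (x - w) i ≤ σ i * u i := by
    have h := hbounds.two_mul_le i
    rw [← htwo, mul_left_comm] at h
    linarith
  have hsum : 2 * ∑ i, σ i * u i = 8 * a + 2 := by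
    rw [← sum_mul_axisCombo a σ, Finset.mul_sum]
    exact Finset.sum_congr rfl fun i _ => by rw [← htwo, mul_left_comm]
  have hnorm : l1Norm (x - w) + l1Norm (x - w - u) = 4 * a + 1 := by
    linarith [l1Norm_add_l1Norm_sub hσ hle]
  rcases le_or_gt (l1Norm (x - w)) (2 * a) with h | h
  · exact ⟨w, hw, h⟩
  · exact ⟨w + u, add_mem hw hu, by rw [← sub_sub]; linarith⟩

/-- For even `k ≥ 4`, `a = k/2`, every point of `ℤ⁴` whose coordinates all have
absolute value at most `a + 1` is within `l¹`-distance `k` of the lattice `L`. -/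
theorem lattice_box_covered_even (k a : ℤ) (hk : 4 ≤ k) (hke : Even k) (ha : a = k / 2)
    (v₁ v₂ v₃ v₄ : Fin 4 → ℤ)
    (hv₁ : v₁ = ![-a - 1, a + 1, a, -a + 1])
    (hv₂ : v₂ = ![a - 1, a + 1, a + 1, -a])
    (hv₃ : v₃ = ![-a - 1, -a + 1, a + 1, -a])
    (hv₄ : v₄ = ![-a, -a, a, a + 1])
    (L : Submodule ℤ (Fin 4 → ℤ))
    (hL : L = Submodule.span ℤ {v₁, v₂, v₃, v₄}) :
    ∀ x : Fin 4 → ℤ, (∀ i : Fin 4, |x i| ≤ a + 1) →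
      ∃ w ∈ L, |x 0 - w 0| + |x 1 - w 1| + |x 2 - w 2| + |x 3 - w 3| ≤ k := by
  obtain ⟨b, rfl⟩ := hke.two_dvd
  obtain rfl : a = b := by omega
  subst hv₁ hv₂ hv₃ hv₄ hL
  intro x _
  obtain ⟨w, hw, hle⟩ := lattice_box_covered_even_general (a := a) (by omega) x
  exact ⟨w, hw, by simpa [l1Norm, Fin.sum_univ_four] using hle⟩
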